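/- arXiv:1509.00378 — 5 statements merged into one kernel-verified Lean document; each statement's English description precedes it below -/
import Mathlib

section
/- Let p be a prime and A, B natural numbers with 2*A*B < p. Let a, a' be integers with |a| ≤ A and |a'| ≤ A, and let b, b' be integers with 0 < b ≤ B and 0 < b' ≤ B. If a·b' ≡ a'·b (mod p), then a·b' = a'·b as integers. -/
/-- Rational reconstruction uniqueness (fraction): if `2*A*B < p` with `p` prime,
`|a|, |a'| ≤ A`, `0 < b, b' ≤ B` and `a*b' ≡ a'*b (mod p)`, then `a*b' = a'*b`. -/
theorem rational_reconstruction_fraction_unique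
    (p : ℕ) (hp : p.Prime) (A B : ℕ) (hAB : 2 * A * B < p)
    (a a' b b' : ℤ)
    (ha : |a| ≤ (A : ℤ)) (ha' : |a'| ≤ (A : ℤ))
    (hb0 : 0 < b) (hb : b ≤ (B : ℤ))
    (hb'0 : 0 < b') (hb' : b' ≤ (B : ℤ))
    (hcong : a * b' ≡ a' * b [ZMOD (p : ℕ)]) :
    a * b' = a' * b := by
  have h1 : |a * b'| ≤ (A : ℤ) * B := by
    rw [abs_mul, abs_of_pos hb'0]
    exact mul_le_mul ha hb' hb'0.le (Int.natCast_nonneg A)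
  have h2 : |a' * b| ≤ (A : ℤ) * B := by
    rw [abs_mul, abs_of_pos hb0]
    exact mul_le_mul ha' hb hb0.le (Int.natCast_nonneg A)
  have hp' : 2 * (A : ℤ) * B < p := by exact_mod_cast hAB
  -- The difference is a multiple of `p` of absolute value at most `2 * A * B < p`.
  have h3 : a' * b - a * b' = 0 := by
    refine Int.eq_zero_of_abs_lt_dvd hcong.dvd ?_
    have h4 := abs_sub (a' * b) (a * b')
    linarith
  linarith
end

section
/- Let p be a prime and A, B natural numbers with 2*A*B < p. Let a, a' be integers with |a| ≤ A and |a'| ≤ A, and let b, b' be integers with 0 < b ≤ B and 0 < b' ≤ B, such that gcd(a,b) = 1 and gcd(a',b') = 1. If a·b' ≡ a'·b (mod p), then a = a' and b = b'. -/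
/-- Rational reconstruction uniqueness (pair): with the normalization
`gcd(a,b) = gcd(a',b') = 1`, the pair `(a, b)` itself is uniquely determined. -/
theorem rational_reconstruction_pair_unique
    (p : ℕ) (hp : p.Prime) (A B : ℕ) (hAB : 2 * A * B < p)
    (a a' b b' : ℤ)
    (ha : |a| ≤ (A : ℤ)) (ha' : |a'| ≤ (A : ℤ))
    (hb0 : 0 < b) (hb : b ≤ (B : ℤ))
    (hb'0 : 0 < b') (hb' : b' ≤ (B : ℤ))
    (hg : Int.gcd a b = 1) (hg' : Int.gcd a' b' = 1)
    (hcong : a * b' ≡ a' * b [ZMOD (p : ℕ)]) :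
    a = a' ∧ b = b' := by
  have hABp : (2 * A * B : ℤ) < p := by exact_mod_cast hAB
  -- The difference of the cross products is a multiple of `p` of absolute value at most
  -- `2 * A * B < p`, so the congruence is an equality.
  have key : a' * b - a * b' = 0 := by
    apply Int.eq_zero_of_abs_lt_dvd hcong.dvd
    have h1 : |a' * b| ≤ (A : ℤ) * B := by
      rw [abs_mul, abs_of_pos hb0]
      gcongr
    have h2 : |a * b'| ≤ (A : ℤ) * B := by
      rw [abs_mul, abs_of_pos hb'0]
      gcongr
    have h4 := abs_sub (a' * b) (a * b')
    linarith
  have heq : a * b' = a' * b := by linarith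
  -- By coprimality each denominator divides the other.
  have hbb' : b ∣ b' :=
    (Int.isCoprime_iff_gcd_eq_one.mpr hg).symm.dvd_of_dvd_mul_left ⟨a', by linarith⟩
  have hb'b : b' ∣ b :=
    (Int.isCoprime_iff_gcd_eq_one.mpr hg').symm.dvd_of_dvd_mul_left ⟨a, by linarith⟩
  have hbeq : b = b' := Int.dvd_antisymm hb0.le hb'0.le hbb' hb'b
  subst hbeq
  exact ⟨mul_right_cancel₀ hb0.ne' heq, rfl⟩
end

section
/- Let p_1 = 2, p_2 = 3, … denote the primes in increasing order. Let k, t be positive integers and let p be a prime with 2·(p_k)^{2t} < p. Let m, m' : {1,…,k} → {0,1} be two k-bit strings differing in at most 2t positions. If ∏_{i=1}^k p_i^{m_i} ≡ ∏_{i=1}^k p_i^{m'_i} (mod p), then m = m'. -/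
/-!
Cancelling the primes at positions where both bits are `1` (each is smaller than `p`, hence a unit
modulo `p`) turns the congruence into one between `∏ i ∈ B, p_i` and `∏ i ∈ C, p_i`, where `B` and
`C` are the disjoint sets of positions at which only `m`, respectively only `m'`, has a `1`. Each of
`B` and `C` has at most `2t` elements, so both products are at most `p_k ^ (2t) < p` and the
congruence is an equality of integers. A prime indexed by `B` would then divide the product over
`C`; as `B` and `C` are disjoint, both are empty.
-/

/-- Unique factorisation for squarefree products of indexed primes; stated as an inclusion, the
other one following by symmetry. -/
lemma subset_of_prod_nth_prime_eq {k : ℕ} {B C : Finset (Fin k)}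
    (h : ∏ i ∈ B, Nat.nth Nat.Prime i.val = ∏ i ∈ C, Nat.nth Nat.Prime i.val) : B ⊆ C := by
  intro i hi
  have hdvd : Nat.nth Nat.Prime i.val ∣ ∏ j ∈ C, Nat.nth Nat.Prime j.val :=
    h ▸ Finset.dvd_prod_of_mem (fun j : Fin k => Nat.nth Nat.Prime j.val) hi
  obtain ⟨j, hj, hij⟩ := (Nat.prime_nth_prime i.val).prime.exists_mem_finset_dvd hdvd
  have heq := (Nat.prime_dvd_prime_iff_eq (Nat.prime_nth_prime _) (Nat.prime_nth_prime _)).1 hij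
  have : i = j := Fin.ext (Nat.nth_injective Nat.infinite_setOfPred_prime heq)
  exact this ▸ hj

/-- Splitting a codeword into the positions shared with `b` and the positions private to `a`. -/
lemma prod_pow_bit_eq {k : ℕ} (q : Fin k → ℕ) (a b : Fin k → Bool) :
    ∏ i, q i ^ (if a i then 1 else 0) =
      (∏ i with a i = true ∧ b i = true, q i) * ∏ i with a i = true ∧ b i = false, q i := by
  rw [Finset.prod_filter, Finset.prod_filter, ← Finset.prod_mul_distrib]
  refine Finset.prod_congr rfl fun i _ => ?_
  cases a i <;> cases b i <;> simp

/-- Correctness of the code for `γ = 2`: if `p` is a prime with `2·(p_k)^{2t} < p`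
and the bit strings `m, m'` differ in at most `2t` positions, then
`c(m) ≡ c(m') (mod p)` forces `m = m'`. -/
theorem ns_code_injective_on_ball
    (k t : ℕ) (hk : 0 < k) (ht : 0 < t) (p : ℕ) (hp : p.Prime)
    (hpbig : 2 * (Nat.nth Nat.Prime (k - 1)) ^ (2 * t) < p)
    (m m' : Fin k → Bool)
    (hdist : (Finset.univ.filter (fun i : Fin k => m i ≠ m' i)).card ≤ 2 * t)
    (hcong : (∏ i : Fin k, (Nat.nth Nat.Prime i.val) ^ (if m i then 1 else 0)) ≡
             (∏ i : Fin k, (Nat.nth Nat.Prime i.val) ^ (if m' i then 1 else 0)) [MOD p]) :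
    m = m' := by
  have hle : ∀ i : Fin k, Nat.nth Nat.Prime i.val ≤ Nat.nth Nat.Prime (k - 1) := fun i =>
    Nat.nth_monotone Nat.infinite_setOfPred_prime (by omega)
  have hQ : 0 < Nat.nth Nat.Prime (k - 1) := (Nat.prime_nth_prime _).pos
  have hlt : ∀ i : Fin k, Nat.nth Nat.Prime i.val < p := fun i => by
    have := Nat.le_self_pow (n := 2 * t) (by omega) (Nat.nth Nat.Prime (k - 1))
    have := hle i
    omega
  have hsmall : ∀ S : Finset (Fin k), S ⊆ Finset.univ.filter (fun i : Fin k => m i ≠ m' i) →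
      ∏ i ∈ S, Nat.nth Nat.Prime i.val < p := fun S hS => by
    have h1 := Finset.prod_le_pow_card S (fun i : Fin k => Nat.nth Nat.Prime i.val) _
      fun i _ => hle i
    have h2 := Nat.pow_le_pow_right hQ ((Finset.card_le_card hS).trans hdist)
    omega
  rw [prod_pow_bit_eq (fun i : Fin k => Nat.nth Nat.Prime i.val) m m',
    prod_pow_bit_eq (fun i : Fin k => Nat.nth Nat.Prime i.val) m' m] at hcong
  simp only [and_comm (a := m' _ = true) (b := m _ = true)] at hcong
  have hcop : Nat.gcd p (∏ i with m i = true ∧ m' i = true, Nat.nth Nat.Prime i.val) = 1 :=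
    Nat.Coprime.prod_right fun i _ =>
      (Nat.coprime_primes hp (Nat.prime_nth_prime _)).2 (hlt i).ne'
  have heq := (Nat.ModEq.cancel_left_of_coprime hcop hcong).eq_of_lt_of_lt
    (hsmall _ fun i => by simp +contextual) (hsmall _ fun i => by simp +contextual)
  have hBC := subset_of_prod_nth_prime_eq heq
  have hCB := subset_of_prod_nth_prime_eq heq.symm
  funext i
  have h1 := @hBC i
  have h2 := @hCB i
  simp only [Finset.mem_filter, Finset.mem_univ, true_and] at h1 h2
  cases hm : m i <;> cases hm' : m' i <;> simp_all
end

section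
/- Let a, b, N, u, p be positive integers with a·b ≤ N and 2^u·N < p. Then there exists a positive integer i such that a ≤ 2^{u·i} and b·2^{u·i} ≤ 2·p. -/
/-- Decoding of the smaller-prime variant: if `a·b ≤ N` and `2^u·N < p`, then some
index `i ≥ 1` satisfies `a ≤ A_i = 2^{u·i}` and `b ≤ B_i = ⌊2p/A_i⌋`
(stated as `b·2^{u·i} ≤ 2·p`). -/
theorem small_prime_variant_bound_pair_exists
    (a b N u p : ℕ) (ha : 0 < a) (hb : 0 < b) (hN : 0 < N) (hu : 0 < u) (hp : 0 < p)
    (hab : a * b ≤ N) (hpN : 2 ^ u * N < p) :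
    ∃ i : ℕ, 0 < i ∧ a ≤ 2 ^ (u * i) ∧ b * 2 ^ (u * i) ≤ 2 * p := by
  have h1 : 1 < 2 ^ u := Nat.one_lt_two_pow (Nat.ne_of_gt hu)
  -- `i = j + 1` where `2^(u*j) ≤ a < 2^(u*(j+1))`; then `b * 2^(u*i) ≤ 2^u * (a * b) < p`.
  refine ⟨Nat.log (2 ^ u) a + 1, Nat.succ_pos _, ?_, ?_⟩
  · rw [pow_mul]
    exact (Nat.lt_pow_succ_log_self h1 a).le
  · have h2 : (2 ^ u) ^ Nat.log (2 ^ u) a ≤ a := Nat.pow_log_le_self _ ha.ne'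
    rw [pow_mul, pow_succ]
    calc b * ((2 ^ u) ^ Nat.log (2 ^ u) a * 2 ^ u)
        ≤ b * (a * 2 ^ u) := by gcongr
      _ = 2 ^ u * (a * b) := by ring
      _ ≤ 2 ^ u * N := by gcongr
      _ ≤ 2 * p := by omega
end

section
/- Let p_1 = 2, p_2 = 3, … denote the primes in increasing order. Let γ ≥ 2, κ ≥ 1 and t ≥ 0 be integers with t ≤ κ, let f = ∏_{j=κ−t}^{κ} p_{γj}, and let p be a prime with 2·f² < p. Let m, m' : {0,…,κ−1} → {0,…,γ−1} be two digit strings with #{i : m_i ≠ m'_i} ≤ t. If ∏_{i=0}^{κ−1} p_{iγ + m_i + 1} ≡ ∏_{i=0}^{κ−1} p_{iγ + m'_i + 1} (mod p), then m = m'. -/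
/-!
Let `D` be the set of positions where `m` and `m'` differ. The primes picked outside `D` are common
to both products and smaller than `p`, so they cancel modulo `p`. What remains are two products of
at most `t` primes, the one at position `i` being at most the last prime of pack `i`; hence both are
at most `f` (`prod_le_prod_Icc_top`), so below `p`, and congruence becomes equality. By unique
factorization a prime picked by `m` in `D` is also picked by `m'` in `D`, and since the packs are
disjoint, it is picked at the same position with the same digit. So `D` is empty.
-/

/-- Among the sets of at most `t + 1` indices up to `κ`, the top ones `κ - t, …, κ` maximize the
product of a monotone function with values at least `1`. -/
lemma prod_le_prod_Icc_top {g : ℕ → ℕ} (hg : Monotone g) (hg1 : ∀ j, 1 ≤ g j) {κ t : ℕ}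
    (ht : t ≤ κ) {S : Finset ℕ} (hS : ∀ j ∈ S, j ≤ κ) (hcard : S.card ≤ t + 1) :
    ∏ j ∈ S, g j ≤ ∏ j ∈ Finset.Icc (κ - t) κ, g j := by
  set I := Finset.Icc (κ - t) κ with hI
  have hc : S.card ≤ I.card := by rw [hI, Nat.card_Icc]; omega
  have hsd : (S \ I).card ≤ (I \ S).card := Finset.card_sdiff_le_card_sdiff_iff.2 hc
  -- Exchange argument: `g (κ - t)` separates the values on `S \ I` from those on `I \ S`.
  have h1 : ∏ j ∈ S \ I, g j ≤ ∏ j ∈ I \ S, g j := calc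
    _ ≤ g (κ - t) ^ (S \ I).card := by
        apply Finset.prod_le_pow_card
        intro j hj
        rw [Finset.mem_sdiff, hI, Finset.mem_Icc] at hj
        have := hS j hj.1
        exact hg (by omega)
    _ ≤ g (κ - t) ^ (I \ S).card := Nat.pow_le_pow_right (hg1 _) hsd
    _ ≤ _ := by
        apply Finset.pow_card_le_prod
        intro j hj
        rw [Finset.mem_sdiff, hI, Finset.mem_Icc] at hj
        exact hg hj.1.1
  rw [← Finset.prod_inter_mul_prod_sdiff S I, ← Finset.prod_inter_mul_prod_sdiff I S,
    Finset.inter_comm I S]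
  exact Nat.mul_le_mul_left _ h1

/-- Correctness of the prime-packing encoding: with `f = ∏_{j=κ−t}^{κ} p_{γj}` and a
prime `p > 2f²`, the map `ĉ(m) = ∏_{i<κ} p_{iγ + m_i + 1} mod p` is injective on
digit strings differing in at most `t` positions. -/
theorem prime_packing_injective_on_ball
    (γ κ t : ℕ) (hγ : 2 ≤ γ) (hκ : 1 ≤ κ) (ht : t ≤ κ) (p : ℕ) (hp : p.Prime)
    (hpbig : 2 * (∏ j ∈ Finset.Icc (κ - t) κ, Nat.nth Nat.Prime (γ * j - 1)) ^ 2 < p)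
    (m m' : Fin κ → Fin γ)
    (hdist : (Finset.univ.filter (fun i : Fin κ => m i ≠ m' i)).card ≤ t)
    (hcong : (∏ i : Fin κ, Nat.nth Nat.Prime (i.val * γ + (m i).val)) ≡
             (∏ i : Fin κ, Nat.nth Nat.Prime (i.val * γ + (m' i).val)) [MOD p]) :
    m = m' := by
  set g : ℕ → ℕ := fun j => Nat.nth Nat.Prime (γ * j - 1) with hgdef
  have hmono : Monotone (Nat.nth Nat.Prime) := Nat.nth_monotone Nat.infinite_setOfPred_prime
  have hg : Monotone g := fun a b hab =>
    hmono (Nat.sub_le_sub_right (Nat.mul_le_mul_left γ hab) 1)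
  have hg1 : ∀ j, 1 ≤ g j := fun j => (Nat.prime_nth_prime _).one_lt.le
  have hfp : ∏ j ∈ Finset.Icc (κ - t) κ, g j < p := by
    change 2 * (∏ j ∈ Finset.Icc (κ - t) κ, g j) ^ 2 < p at hpbig
    nlinarith [Nat.le_self_pow two_ne_zero (∏ j ∈ Finset.Icc (κ - t) κ, g j)]
  have hq : ∀ (n : Fin κ → Fin γ) (i : Fin κ),
      Nat.nth Nat.Prime (i.val * γ + (n i).val) ≤ g (i.val + 1) := by
    intro n i
    apply hmono
    have h1 := (n i).isLt
    have h2 : γ * (i.val + 1) = i.val * γ + γ := by ring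
    omega
  have hsub : ∀ (n : Fin κ → Fin γ) (T : Finset (Fin κ)), T.card ≤ t + 1 →
      ∏ i ∈ T, Nat.nth Nat.Prime (i.val * γ + (n i).val) < p := by
    intro n T hT
    have hinj : Set.InjOn (fun i : Fin κ => i.val + 1) T := by
      intro a _ b _ hab
      exact Fin.ext (Nat.succ_injective hab)
    calc _ ≤ ∏ i ∈ T, g (i.val + 1) := Finset.prod_le_prod' fun i _ => hq n i
      _ = ∏ j ∈ T.image (fun i : Fin κ => i.val + 1), g j := (Finset.prod_image hinj).symm
      _ ≤ _ := by
        apply prod_le_prod_Icc_top hg hg1 ht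
        · intro j hj
          obtain ⟨i, -, rfl⟩ := Finset.mem_image.1 hj
          exact i.isLt
        · exact Finset.card_image_le.trans hT
      _ < p := hfp
  set D := Finset.univ.filter (fun i : Fin κ => m i ≠ m' i) with hD
  rw [← Finset.prod_mul_prod_compl D, ← Finset.prod_mul_prod_compl D
    (fun i : Fin κ => Nat.nth Nat.Prime (i.val * γ + (m' i).val))] at hcong
  have hcompl : ∏ i ∈ Dᶜ, Nat.nth Nat.Prime (i.val * γ + (m' i).val) =
      ∏ i ∈ Dᶜ, Nat.nth Nat.Prime (i.val * γ + (m i).val) := by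
    refine Finset.prod_congr rfl fun i hi => ?_
    have : m i = m' i := by simpa [hD] using hi
    rw [this]
  have hcop : p.Coprime (∏ i ∈ Dᶜ, Nat.nth Nat.Prime (i.val * γ + (m i).val)) := by
    refine Nat.Coprime.prod_right fun i _ => ?_
    rw [Nat.coprime_primes hp (Nat.prime_nth_prime _)]
    have := hsub m {i} (by simp)
    rw [Finset.prod_singleton] at this
    exact this.ne'
  rw [hcompl] at hcong
  have heq := (Nat.ModEq.cancel_right_of_coprime hcop hcong).eq_of_lt_of_lt
    (hsub m D (by omega)) (hsub m' D (by omega))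
  by_contra hne
  obtain ⟨i, hi⟩ := Function.ne_iff.1 hne
  have hiD : i ∈ D := by simpa [hD] using hi
  have hdvd := Finset.dvd_prod_of_mem
    (fun i : Fin κ => Nat.nth Nat.Prime (i.val * γ + (m i).val)) hiD
  rw [heq, (Nat.prime_nth_prime _).prime.dvd_finsetProd_iff] at hdvd
  obtain ⟨j, -, hj⟩ := hdvd
  rw [Nat.prime_dvd_prime_iff_eq (Nat.prime_nth_prime _) (Nat.prime_nth_prime _)] at hj
  have hidx := Nat.nth_injective Nat.infinite_setOfPred_prime hj
  -- Division with remainder by `γ` recovers the position and the digit from the index of the prime.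
  have hγ0 : 0 < γ := by omega
  have hij : i = j := by
    have h := congrArg (· / γ) hidx
    simp only [Nat.add_comm (_ * γ), Nat.add_mul_div_right _ _ hγ0,
      Nat.div_eq_of_lt (Fin.isLt _), Nat.zero_add] at h
    exact Fin.ext h
  subst hij
  exact hi (Fin.ext (Nat.add_left_cancel hidx))
end
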